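/- Let α and β be finite types, P a transition matrix over α × β with strictly positive stationary probability vector μ, and γ ∈ [0,1). Let r_A : α → ℝ and r_B : β → ℝ satisfy ‖r_A‖_∞ ≤ R_A and ‖r_B‖_∞ ≤ R_B. Suppose there exist a finite index set K, reals x_j with ∑_{j∈K} x_j = 1, transition matrices A_j over α and B_j over β, such that the matrix S = ∑_{j∈K} x_j (A_j ⊗ B_j) has all entries nonnegative and ‖P − S‖_TV ≤ ε. Let P_A and P_B be the marginalized local transition matrices of P with respect to μ, and set Q = (I − γP)^{-1}(r_A ⊗ e + e ⊗ r_B), Q_A = (I − γP_A)^{-1} r_A, Q_B = (I − γP_B)^{-1} r_B (all three inverses exist). Then: (i) ‖P_A − ∑_{j∈K} x_j A_j‖_TV ≤ ε and ‖P_B − ∑_{j∈K} x_j B_j‖_TV ≤ ε; and (ii) ‖Q − (Q_A ⊗ e + e ⊗ Q_B)‖_∞ ≤ 4γ ε (R_A + R_B) / (1 − γ)². -/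

import Mathlib

open Matrix

/-- A transition matrix: nonnegative entries, each row sums to 1. -/
def IsTransition {ι : Type*} [Fintype ι] (P : Matrix ι ι ℝ) : Prop :=
  (∀ i j, 0 ≤ P i j) ∧ ∀ i, ∑ j, P i j = 1

/-- Kronecker product of a matrix over `α` and a matrix over `β`. -/
def kron {α β : Type*} (A : Matrix α α ℝ) (B : Matrix β β ℝ) :
    Matrix (α × β) (α × β) ℝ :=
  Matrix.of fun p q => A p.1 q.1 * B p.2 q.2

/-- The marginalized local transition matrix of agent `A`. -/
noncomputable def localA {α β : Type*} [Fintype α] [Fintype β]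
    (P : Matrix (α × β) (α × β) ℝ) (μ : α × β → ℝ) : Matrix α α ℝ :=
  Matrix.of fun a a' =>
    ∑ b, (μ (a, b) / ∑ b', μ (a, b')) * ∑ b', P (a, b) (a', b')

/-- The marginalized local transition matrix of agent `B`. -/
noncomputable def localB {α β : Type*} [Fintype α] [Fintype β]
    (P : Matrix (α × β) (α × β) ℝ) (μ : α × β → ℝ) : Matrix β β ℝ :=
  Matrix.of fun b b' =>
    ∑ a, (μ (a, b) / ∑ a', μ (a', b)) * ∑ a', P (a, b) (a', b')

/-- A discounted transition matrix contracts the sup norm, so `v - γ T v` controls `v`. -/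
theorem IsTransition.abs_le_div {ι : Type*} [Fintype ι] {T : Matrix ι ι ℝ} (hT : IsTransition T)
    {γ c : ℝ} (hγ0 : 0 ≤ γ) (hγ1 : γ < 1) {v : ι → ℝ}
    (hv : ∀ i, |v i - γ * ∑ j, T i j * v j| ≤ c) (i : ι) : |v i| ≤ c / (1 - γ) := by
  obtain ⟨m, -, hm⟩ := Finset.exists_max_image Finset.univ (fun j => |v j|) ⟨i, Finset.mem_univ i⟩
  have hsum : |∑ j, T m j * v j| ≤ |v m| := by
    calc |∑ j, T m j * v j| ≤ ∑ j, |T m j * v j| := Finset.abs_sum_le_sum_abs _ _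
      _ ≤ ∑ j, T m j * |v m| := by
        refine Finset.sum_le_sum fun j hj => ?_
        rw [abs_mul, abs_of_nonneg (hT.1 m j)]
        exact mul_le_mul_of_nonneg_left (hm j hj) (hT.1 m j)
      _ = |v m| := by rw [← Finset.sum_mul, hT.2, one_mul]
  have htri : |v m| ≤ |v m - γ * ∑ j, T m j * v j| + γ * |∑ j, T m j * v j| := by
    have h := abs_add_le (v m - γ * ∑ j, T m j * v j) (γ * ∑ j, T m j * v j)
    rwa [sub_add_cancel, abs_mul, abs_of_nonneg hγ0] at h
  refine (hm i (Finset.mem_univ i)).trans ?_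
  rw [le_div_iff₀ (by linarith)]
  nlinarith [hv m, mul_le_mul_of_nonneg_left hsum hγ0]

theorem one_sub_smul_mulVec_apply {ι : Type*} [Fintype ι] [DecidableEq ι] (T : Matrix ι ι ℝ)
    (γ : ℝ) (v : ι → ℝ) (i : ι) :
    (1 - γ • T).mulVec v i = v i - γ * ∑ j, T i j * v j := by
  rw [Matrix.sub_mulVec, Matrix.smul_mulVec, Matrix.one_mulVec]
  rfl

theorem IsTransition.isUnit_one_sub_smul {ι : Type*} [Fintype ι] [DecidableEq ι]
    {T : Matrix ι ι ℝ} (hT : IsTransition T) {γ : ℝ} (hγ0 : 0 ≤ γ) (hγ1 : γ < 1) :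
    IsUnit (1 - γ • T) := by
  rw [← Matrix.mulVec_injective_iff_isUnit]
  intro v w hvw
  have hzero : (1 - γ • T).mulVec (v - w) = 0 := by
    rw [Matrix.mulVec_sub, sub_eq_zero]
    exact hvw
  ext i
  have h := hT.abs_le_div (c := 0) hγ0 hγ1 (v := v - w)
    (fun i => by rw [← one_sub_smul_mulVec_apply, hzero]; simp) i
  rw [zero_div, abs_nonpos_iff, Pi.sub_apply] at h
  exact sub_eq_zero.mp h

/-- The Bellman equation satisfied by `(1 - γ T)⁻¹ r`. -/
theorem IsTransition.bellman {ι : Type*} [Fintype ι] [DecidableEq ι]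
    {T : Matrix ι ι ℝ} (hT : IsTransition T) {γ : ℝ} (hγ0 : 0 ≤ γ) (hγ1 : γ < 1)
    (r : ι → ℝ) (i : ι) :
    ((1 - γ • T)⁻¹).mulVec r i - γ * ∑ j, T i j * ((1 - γ • T)⁻¹).mulVec r j = r i := by
  rw [← one_sub_smul_mulVec_apply, Matrix.mulVec_mulVec, Matrix.mul_nonsing_inv, Matrix.one_mulVec]
  exact (Matrix.isUnit_iff_isUnit_det _).mp (hT.isUnit_one_sub_smul hγ0 hγ1)

theorem sum_div_sum_eq_one {α β : Type*} [Fintype β] [Nonempty β] {μ : α × β → ℝ}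
    (hμ : ∀ p, 0 < μ p) (a : α) : ∑ b, μ (a, b) / ∑ b', μ (a, b') = 1 := by
  rw [← Finset.sum_div]
  exact div_self (Finset.sum_pos (fun b _ => hμ (a, b)) Finset.univ_nonempty).ne'

theorem div_sum_nonneg {α β : Type*} [Fintype β] {μ : α × β → ℝ}
    (hμ : ∀ p, 0 < μ p) (a : α) (b : β) : 0 ≤ μ (a, b) / ∑ b', μ (a, b') :=
  div_nonneg (hμ _).le (Finset.sum_nonneg fun b' _ => (hμ (a, b')).le)

theorem isTransition_localA {α β : Type*} [Fintype α] [Fintype β] [Nonempty β]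
    {P : Matrix (α × β) (α × β) ℝ} (hP : IsTransition P) {μ : α × β → ℝ} (hμ : ∀ p, 0 < μ p) :
    IsTransition (localA P μ) := by
  refine ⟨fun a a' => Finset.sum_nonneg fun b _ =>
    mul_nonneg (div_sum_nonneg hμ a b) (Finset.sum_nonneg fun b' _ => hP.1 _ _), fun a => ?_⟩
  simp only [localA, Matrix.of_apply]
  rw [Finset.sum_comm]
  simp_rw [← Finset.mul_sum, ← Fintype.sum_prod_type, hP.2, mul_one]
  exact sum_div_sum_eq_one hμ a

/-- Marginalization does not increase the total-variation distance to a matrix `S` whose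
`α`-marginal is `SA`. -/
theorem localA_tv_le {α β : Type*} [Fintype α] [Fintype β] [Nonempty β]
    {P S : Matrix (α × β) (α × β) ℝ} {SA : Matrix α α ℝ} {μ : α × β → ℝ} {ε : ℝ}
    (hμ : ∀ p, 0 < μ p) (hS : ∀ p a', ∑ b', S p (a', b') = SA p.1 a')
    (hTV : ∀ p, (1 / 2 : ℝ) * ∑ q, |P p q - S p q| ≤ ε) (a : α) :
    (1 / 2 : ℝ) * ∑ a', |localA P μ a a' - SA a a'| ≤ ε := by
  have hentry : ∀ a', localA P μ a a' - SA a a' =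
      ∑ b, (μ (a, b) / ∑ b', μ (a, b')) * ∑ b', (P (a, b) (a', b') - S (a, b) (a', b')) := by
    intro a'
    simp_rw [Finset.sum_sub_distrib, hS, mul_sub, Finset.sum_sub_distrib, ← Finset.sum_mul]
    rw [sum_div_sum_eq_one hμ a, one_mul]
    rfl
  calc (1 / 2 : ℝ) * ∑ a', |localA P μ a a' - SA a a'|
      ≤ (1 / 2 : ℝ) * ∑ a', ∑ b, (μ (a, b) / ∑ b', μ (a, b')) *
          ∑ b', |P (a, b) (a', b') - S (a, b) (a', b')| := by
        gcongr with a' _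
        rw [hentry]
        refine (Finset.abs_sum_le_sum_abs _ _).trans (Finset.sum_le_sum fun b _ => ?_)
        rw [abs_mul, abs_of_nonneg (div_sum_nonneg hμ a b)]
        exact mul_le_mul_of_nonneg_left (Finset.abs_sum_le_sum_abs _ _) (div_sum_nonneg hμ a b)
    _ = ∑ b, (μ (a, b) / ∑ b', μ (a, b')) *
          ((1 / 2 : ℝ) * ∑ q, |P (a, b) q - S (a, b) q|) := by
        rw [Finset.sum_comm]
        simp_rw [Fintype.sum_prod_type, ← Finset.mul_sum]
        rw [Finset.mul_sum]
        exact Finset.sum_congr rfl fun b _ => by ring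
    _ ≤ ∑ b, (μ (a, b) / ∑ b', μ (a, b')) * ε :=
        Finset.sum_le_sum fun b _ => mul_le_mul_of_nonneg_left (hTV _) (div_sum_nonneg hμ a b)
    _ = ε := by rw [← Finset.sum_mul, sum_div_sum_eq_one hμ a, one_mul]

theorem abs_sum_mul_sub_le_of_tv {ι : Type*} [Fintype ι] {p s v : ι → ℝ} {ε c : ℝ}
    (hTV : (1 / 2 : ℝ) * ∑ j, |p j - s j| ≤ ε) (hc : 0 ≤ c) (hv : ∀ j, |v j| ≤ c) :
    |∑ j, p j * v j - ∑ j, s j * v j| ≤ 2 * ε * c := by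
  rw [← Finset.sum_sub_distrib]
  calc |∑ j, (p j * v j - s j * v j)| ≤ ∑ j, |p j * v j - s j * v j| :=
        Finset.abs_sum_le_sum_abs _ _
    _ ≤ ∑ j, |p j - s j| * c := by
        refine Finset.sum_le_sum fun j _ => ?_
        rw [← sub_mul, abs_mul]
        exact mul_le_mul_of_nonneg_left (hv j) (abs_nonneg _)
    _ = (∑ j, |p j - s j|) * c := by rw [Finset.sum_mul]
    _ ≤ 2 * ε * c := mul_le_mul_of_nonneg_right (by linarith) hc

/-- On functions of the first coordinate, `P` and its marginalization act almost alike. -/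
theorem abs_sum_fst_sub_localA_le {α β : Type*} [Fintype α] [Fintype β] [Nonempty β]
    {P S : Matrix (α × β) (α × β) ℝ} {SA : Matrix α α ℝ} {μ : α × β → ℝ} {ε c : ℝ}
    (hμ : ∀ p, 0 < μ p) (hS : ∀ p a', ∑ b', S p (a', b') = SA p.1 a')
    (hTV : ∀ p, (1 / 2 : ℝ) * ∑ q, |P p q - S p q| ≤ ε) {v : α → ℝ} (hc : 0 ≤ c)
    (hv : ∀ a, |v a| ≤ c) (p : α × β) :
    |∑ q, P p q * v q.1 - ∑ a', localA P μ p.1 a' * v a'| ≤ 4 * ε * c := by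
  have hglobal := abs_sum_mul_sub_le_of_tv (hTV p) hc (fun q : α × β => hv q.1)
  have hlocal := abs_sum_mul_sub_le_of_tv (localA_tv_le hμ hS hTV p.1) hc hv
  have hmarg : ∑ q, S p q * v q.1 = ∑ a', SA p.1 a' * v a' := by
    simp_rw [Fintype.sum_prod_type, ← Finset.sum_mul, hS]
  rw [hmarg] at hglobal
  rw [abs_le] at *
  constructor <;> linarith [hglobal.1, hglobal.2, hlocal.1, hlocal.2]

theorem sum_smul_kron_apply {α β K : Type*} [Fintype K] (x : K → ℝ)
    (A : K → Matrix α α ℝ) (B : K → Matrix β β ℝ) (p q : α × β) :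
    (∑ j, x j • kron (A j) (B j)) p q = ∑ j, x j * (A j p.1 q.1 * B j p.2 q.2) := by
  simp [Matrix.sum_apply, kron]

theorem sum_snd_smul_kron {α β K : Type*} [Fintype β] [Fintype K] (x : K → ℝ)
    (A : K → Matrix α α ℝ) {B : K → Matrix β β ℝ} (hB : ∀ j, IsTransition (B j))
    (p : α × β) (a' : α) :
    ∑ b', (∑ j, x j • kron (A j) (B j)) p (a', b') = (∑ j, x j • A j) p.1 a' := by
  simp_rw [sum_smul_kron_apply]
  rw [Finset.sum_comm]
  simp_rw [← Finset.mul_sum, (hB _).2, mul_one]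
  simp [Matrix.sum_apply]

theorem sum_prod_swap {α β : Type*} [Fintype α] [Fintype β] (f : α × β → ℝ) :
    ∑ q : β × α, f q.swap = ∑ q, f q :=
  (Equiv.prodComm β α).sum_comp f

/-- Decomposition error bounded by the measure of Markov entanglement w.r.t. the total
variation distance: TV-closeness of `P` to a separable matrix `S` gives TV-bounds for the
local transitions and an entrywise `4γε(R_A+R_B)/(1−γ)²` bound on the Q-value
decomposition error. -/
theorem stmt10 {α β K : Type*} [Fintype α] [Fintype β] [Fintype K]
    [DecidableEq α] [DecidableEq β]
    (P : Matrix (α × β) (α × β) ℝ) (hP : IsTransition P)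
    (μ : α × β → ℝ) (hμpos : ∀ p, 0 < μ p) (hμsum : ∑ p, μ p = 1)
    (hstat : ∀ q, ∑ p, μ p * P p q = μ q)
    (γ RA RB ε : ℝ) (hγ0 : 0 ≤ γ) (hγ1 : γ < 1)
    (rA : α → ℝ) (rB : β → ℝ) (hrA : ∀ a, |rA a| ≤ RA) (hrB : ∀ b, |rB b| ≤ RB)
    (x : K → ℝ) (hx : ∑ j, x j = 1)
    (A : K → Matrix α α ℝ) (B : K → Matrix β β ℝ)
    (hA : ∀ j, IsTransition (A j)) (hB : ∀ j, IsTransition (B j))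
    (hSnonneg : ∀ p q, 0 ≤ (∑ j, x j • kron (A j) (B j)) p q)
    (hTV : ∀ p, (1 / 2 : ℝ) * ∑ q, |P p q - (∑ j, x j • kron (A j) (B j)) p q| ≤ ε) :
    (∀ a, (1 / 2 : ℝ) * ∑ a', |localA P μ a a' - (∑ j, x j • A j) a a'| ≤ ε) ∧
    (∀ b, (1 / 2 : ℝ) * ∑ b', |localB P μ b b' - (∑ j, x j • B j) b b'| ≤ ε) ∧
    ∀ p, |((1 - γ • P)⁻¹).mulVec (fun q => rA q.1 + rB q.2) p
            - ((((1 - γ • localA P μ)⁻¹).mulVec rA) p.1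
              + (((1 - γ • localB P μ)⁻¹).mulVec rB) p.2)|
        ≤ 4 * γ * ε * (RA + RB) / (1 - γ) ^ 2 := by
  obtain ⟨⟨a₀, b₀⟩⟩ : Nonempty (α × β) := by
    by_contra h
    rw [not_nonempty_iff] at h
    simp at hμsum
  have : Nonempty α := ⟨a₀⟩
  have : Nonempty β := ⟨b₀⟩
  have hSA := sum_snd_smul_kron x A hB
  have hSB := sum_snd_smul_kron x B hA
  -- The claims about `localB` are those about `localA` after exchanging the two factors.
  have hswap : localB P μ = localA (P.submatrix Prod.swap Prod.swap) (μ ∘ Prod.swap) := rfl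
  have hP' : IsTransition (P.submatrix (Prod.swap : β × α → _) Prod.swap) :=
    ⟨fun _ _ => hP.1 _ _, fun p => by
      simp only [Matrix.submatrix_apply]
      rw [sum_prod_swap (fun q => P p.swap q), hP.2]⟩
  have hμ' : ∀ p : β × α, 0 < (μ ∘ Prod.swap) p := fun p => hμpos p.swap
  have hTV' : ∀ p : β × α, (1 / 2 : ℝ) * ∑ q, |P.submatrix Prod.swap Prod.swap p q -
      (∑ j, x j • kron (B j) (A j)) p q| ≤ ε := by
    intro p
    refine le_of_eq_of_le ?_ (hTV p.swap)
    rw [← sum_prod_swap]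
    simp only [sum_smul_kron_apply, Matrix.submatrix_apply, Prod.fst_swap, Prod.snd_swap,
      Prod.swap_swap, mul_comm]
  refine ⟨localA_tv_le hμpos hSA hTV, ?_, fun p => ?_⟩
  · rw [hswap]
    exact localA_tv_le hμ' hSB hTV'
  have hTA := isTransition_localA hP hμpos
  have hTB : IsTransition (localB P μ) := hswap ▸ isTransition_localA hP' hμ'
  have hQ := hP.bellman hγ0 hγ1 (fun q => rA q.1 + rB q.2)
  have hQA := hTA.bellman hγ0 hγ1 rA
  have hQB := hTB.bellman hγ0 hγ1 rB
  set Q := ((1 - γ • P)⁻¹).mulVec (fun q => rA q.1 + rB q.2)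
  set QA := ((1 - γ • localA P μ)⁻¹).mulVec rA
  set QB := ((1 - γ • localB P μ)⁻¹).mulVec rB
  have hγ : 0 < 1 - γ := by linarith
  have hRA : 0 ≤ RA / (1 - γ) := div_nonneg ((abs_nonneg _).trans (hrA a₀)) hγ.le
  have hRB : 0 ≤ RB / (1 - γ) := div_nonneg ((abs_nonneg _).trans (hrB b₀)) hγ.le
  have hQA_le := hTA.abs_le_div hγ0 hγ1 (v := QA) (fun a => by rw [hQA]; exact hrA a)
  have hQB_le := hTB.abs_le_div hγ0 hγ1 (v := QB) (fun b => by rw [hQB]; exact hrB b)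
  have hdiff : ∀ q : α × β, |(Q q - (QA q.1 + QB q.2)) -
      γ * ∑ q', P q q' * (Q q' - (QA q'.1 + QB q'.2))| ≤
        4 * γ * ε * (RA + RB) / (1 - γ) := by
    intro q
    have hdA := abs_sum_fst_sub_localA_le hμpos hSA hTV hRA hQA_le q
    have hdB := abs_sum_fst_sub_localA_le hμ' hSB hTV' hRB hQB_le q.swap
    rw [← hswap] at hdB
    simp only [Matrix.submatrix_apply, Prod.swap_swap, Prod.fst_swap] at hdB
    rw [← sum_prod_swap] at hdB
    simp only [Prod.swap_swap, Prod.fst_swap] at hdB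
    have hsplit : (Q q - (QA q.1 + QB q.2)) - γ * ∑ q', P q q' * (Q q' - (QA q'.1 + QB q'.2)) =
        γ * ((∑ q', P q q' * QA q'.1 - ∑ a', localA P μ q.1 a' * QA a') +
          (∑ q', P q q' * QB q'.2 - ∑ b', localB P μ q.2 b' * QB b')) := by
      simp_rw [mul_sub, mul_add, Finset.sum_sub_distrib, Finset.sum_add_distrib]
      linear_combination hQ q - hQA q.1 - hQB q.2
    rw [hsplit, abs_mul, abs_of_nonneg hγ0]
    calc _ ≤ γ * (4 * ε * (RA / (1 - γ)) + 4 * ε * (RB / (1 - γ))) :=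
          mul_le_mul_of_nonneg_left ((abs_add_le _ _).trans (add_le_add hdA hdB)) hγ0
      _ = 4 * γ * ε * (RA + RB) / (1 - γ) := by ring
  have h := hP.abs_le_div hγ0 hγ1 (v := fun q => Q q - (QA q.1 + QB q.2)) hdiff p
  rwa [div_div, ← sq] at h
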